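/- arXiv:2511.07258 — 5 statements merged into one kernel-verified Lean document; each statement's English description precedes it below -/
import Mathlib

section
/- Let s, n be positive natural numbers and let Q : ℝˢ → ℂ^{n×n} be continuous with Q(ω) Hermitian positive definite for every ω ∈ ℝˢ. Then there exists a continuous map L : ℝˢ → ℂ^{n×n} such that L(ω) is invertible and Q(ω) = L(ω)·L(ω)ᴴ for every ω ∈ ℝˢ. -/
open Matrix ComplexOrder

open scoped MatrixOrder Matrix.Norms.L2Operator in
/-- The positive square root is continuous along a continuous positive definite family. -/
theorem continuous_sqrt_aux {X : Type*} [TopologicalSpace X] (n : ℕ)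
    (Q : X → Matrix (Fin n) (Fin n) ℂ) (hQcont : Continuous Q) (hQpos : ∀ ω, (Q ω).PosDef) :
    Continuous (fun ω => CFC.sqrt (Q ω)) :=
  (CFC.continuousOn_sqrt (A := Matrix (Fin n) (Fin n) ℂ)).comp_continuous hQcont
    (fun ω => (hQpos ω).posSemidef.nonneg)

open scoped MatrixOrder in
/-- **Statement 10.** A continuous family of Hermitian positive definite matrices admits
a continuous family of invertible factors: `Q(ω) = L(ω)·L(ω)ᴴ` with `L(ω)` invertible. -/
theorem exists_factor_aux {X : Type*} [TopologicalSpace X] (n : ℕ)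
    (Q : X → Matrix (Fin n) (Fin n) ℂ) (hQcont : Continuous Q) (hQpos : ∀ ω, (Q ω).PosDef) :
    ∃ L : X → Matrix (Fin n) (Fin n) ℂ,
      Continuous L ∧ ∀ ω, IsUnit (L ω) ∧ Q ω = L ω * (L ω)ᴴ := by
  refine ⟨fun ω => CFC.sqrt (Q ω), continuous_sqrt_aux n Q hQcont hQpos, fun ω => ?_⟩
  have h1 : CFC.sqrt (Q ω) * CFC.sqrt (Q ω) = Q ω :=
    CFC.sqrt_mul_sqrt_self (Q ω) (hQpos ω).posSemidef.nonneg
  have h2 : (CFC.sqrt (Q ω))ᴴ = CFC.sqrt (Q ω) :=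
    (CFC.sqrt_nonneg (Q ω)).posSemidef.isHermitian
  refine ⟨?_, ?_⟩
  · have h3 := (hQpos ω).isUnit
    rw [← h1] at h3
    exact (Commute.isUnit_mul_iff (Commute.refl _)).1 h3 |>.1
  · simp only [h2, h1]

/-- **Statement 10.** A continuous family of Hermitian positive definite matrices admits
a continuous family of invertible factors: `Q(ω) = L(ω)·L(ω)ᴴ` with `L(ω)` invertible. -/
theorem exists_continuous_cholesky_factor
    (s n : ℕ) (hs : 0 < s) (hn : 0 < n)
    (Q : EuclideanSpace ℝ (Fin s) → Matrix (Fin n) (Fin n) ℂ)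
    (hQcont : Continuous Q)
    (hQpos : ∀ ω, (Q ω).PosDef) :
    ∃ L : EuclideanSpace ℝ (Fin s) → Matrix (Fin n) (Fin n) ℂ,
      Continuous L ∧ ∀ ω, IsUnit (L ω) ∧ Q ω = L ω * (L ω)ᴴ :=
  exists_factor_aux n Q hQcont hQpos
end

section
/- Let s, n be positive natural numbers and let H : ℝˢ → ℂ^{n×n} be continuous with H(ω) Hermitian for every ω ∈ ℝˢ. Then there exist continuous functions λ₁, …, λₙ : ℝˢ → ℝ such that for every ω ∈ ℝˢ, λ₁(ω) ≤ λ₂(ω) ≤ … ≤ λₙ(ω) are exactly the eigenvalues of H(ω) counted with multiplicity, and there exists a unitary matrix U(ω) ∈ ℂ^{n×n} with H(ω) = U(ω)·diag(λ₁(ω), …, λₙ(ω))·U(ω)ᴴ. -/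
open Matrix

/-- Sorted unitary diagonalization of a single Hermitian matrix. -/
lemma aux_sorted_diag {n : ℕ} (A : Matrix (Fin n) (Fin n) ℂ) (hA : A.IsHermitian) :
    ∃ μ : Fin n → ℝ, Monotone μ ∧
      ∃ U : Matrix (Fin n) (Fin n) ℂ, U ∈ Matrix.unitaryGroup (Fin n) ℂ ∧
          A = U * Matrix.diagonal (fun i => ((μ i : ℝ) : ℂ)) * Uᴴ := by
  let σ := Tuple.sort hA.eigenvalues
  let V : Matrix (Fin n) (Fin n) ℂ := hA.eigenvectorUnitary
  have hV : V * Vᴴ = 1 := Matrix.mem_unitaryGroup_iff.1 hA.eigenvectorUnitary.2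
  have hs : A = V * Matrix.diagonal (fun i => ((hA.eigenvalues i : ℝ) : ℂ)) * Vᴴ := by
    have := hA.spectral_theorem
    rw [Unitary.conjStarAlgAut_apply] at this
    exact this
  refine ⟨hA.eigenvalues ∘ σ, Tuple.monotone_sort _, V.submatrix id σ, ?_, ?_⟩
  · rw [Matrix.mem_unitaryGroup_iff, Matrix.star_eq_conjTranspose, Matrix.conjTranspose_submatrix,
      Matrix.submatrix_mul_equiv, hV]
    simp
  · have hd : Matrix.diagonal (fun i => (((hA.eigenvalues ∘ σ) i : ℝ) : ℂ)) =
        (Matrix.diagonal (fun i => ((hA.eigenvalues i : ℝ) : ℂ))).submatrix σ σ := by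
      rw [Matrix.submatrix_diagonal_equiv]
      rfl
    rw [hd, Matrix.conjTranspose_submatrix, Matrix.submatrix_mul_equiv,
      Matrix.submatrix_mul_equiv, ← hs]
    simp

open Polynomial in
lemma aux_charpoly {n : ℕ} (A U : Matrix (Fin n) (Fin n) ℂ) (μ : Fin n → ℝ)
    (hU : U ∈ Matrix.unitaryGroup (Fin n) ℂ)
    (h : A = U * Matrix.diagonal (fun i => ((μ i : ℝ) : ℂ)) * Uᴴ) :
    A.charpoly = ∏ i, (X - C ((μ i : ℝ) : ℂ)) := by
  have h1 : Uᴴ * U = 1 := Matrix.mem_unitaryGroup_iff'.1 hU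
  rw [h, charpoly_mul_comm, ← mul_assoc, h1, one_mul, charpoly_diagonal]

lemma aux_trace {n : ℕ} (A U : Matrix (Fin n) (Fin n) ℂ) (μ : Fin n → ℝ)
    (hU : U ∈ Matrix.unitaryGroup (Fin n) ℂ)
    (h : A = U * Matrix.diagonal (fun i => ((μ i : ℝ) : ℂ)) * Uᴴ) :
    ((A * A).trace).re = ∑ i, μ i ^ 2 := by
  have h1 : Uᴴ * U = 1 := Matrix.mem_unitaryGroup_iff'.1 hU
  set D := Matrix.diagonal (fun i => ((μ i : ℝ) : ℂ)) with hD
  have : A * A = U * (D * D) * Uᴴ := by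
    rw [h]
    calc U * D * Uᴴ * (U * D * Uᴴ) = U * D * (Uᴴ * U) * D * Uᴴ := by simp only [mul_assoc]
      _ = _ := by rw [h1]; simp only [mul_assoc, one_mul]
  rw [this, Matrix.trace_mul_comm, ← mul_assoc, h1, one_mul, hD, diagonal_mul_diagonal,
    trace_diagonal, Complex.re_sum]
  refine Finset.sum_congr rfl fun i _ => ?_
  rw [← Complex.ofReal_mul, Complex.ofReal_re, sq]

open Polynomial in
lemma aux_roots {n : ℕ} (μ : Fin n → ℝ) :
    (∏ i, (X - C ((μ i : ℝ) : ℂ))).roots =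
      (Finset.univ : Finset (Fin n)).val.map (fun i => ((μ i : ℝ) : ℂ)) := by
  rw [Polynomial.roots_prod]
  · simp
  · simp [Finset.prod_ne_zero_iff, Polynomial.X_sub_C_ne_zero]

lemma aux_unique {n : ℕ} (μ ν : Fin n → ℝ) (hμ : Monotone μ) (hν : Monotone ν)
    (h : ∀ x : ℂ, ∏ i, (x - ((μ i : ℝ) : ℂ)) = ∏ i, (x - ((ν i : ℝ) : ℂ))) : μ = ν := by
  have hp : (∏ i, (Polynomial.X - Polynomial.C ((μ i : ℝ) : ℂ))) =
      ∏ i, (Polynomial.X - Polynomial.C ((ν i : ℝ) : ℂ)) := by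
    apply Polynomial.funext
    intro x
    simpa [Polynomial.eval_prod] using h x
  have hr := congrArg (fun p => p.roots.map Complex.re) hp
  simp only [aux_roots, Fin.univ_val_map, Multiset.map_coe, List.map_ofFn, Function.comp_def,
    Complex.ofReal_re] at hr
  have hperm : (List.ofFn μ).Perm (List.ofFn ν) := Multiset.coe_eq_coe.1 hr
  exact List.ofFn_injective (hperm.eq_of_pairwise' hμ.sortedLE_ofFn.pairwise hν.sortedLE_ofFn.pairwise)

/-- **Statement 11.** A continuous family of Hermitian matrices admits continuous,
pointwise nondecreasing eigenvalue functions `λ₁ ≤ … ≤ λₙ` which are exactly the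
eigenvalues counted with multiplicity (the roots of the characteristic polynomial),
together with a pointwise unitary diagonalization. -/
theorem exists_continuous_ordered_eigenvalues
    (s n : ℕ) (hs : 0 < s) (hn : 0 < n)
    (H : EuclideanSpace ℝ (Fin s) → Matrix (Fin n) (Fin n) ℂ)
    (hHcont : Continuous H)
    (hHherm : ∀ ω, (H ω).IsHermitian) :
    ∃ lam : Fin n → EuclideanSpace ℝ (Fin s) → ℝ,
      (∀ i, Continuous (lam i)) ∧
      ∀ ω : EuclideanSpace ℝ (Fin s),
        (∀ i j : Fin n, i ≤ j → lam i ω ≤ lam j ω) ∧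
        (H ω).charpoly.roots =
          (Finset.univ : Finset (Fin n)).val.map (fun i => ((lam i ω : ℝ) : ℂ)) ∧
        ∃ U : Matrix (Fin n) (Fin n) ℂ, U ∈ Matrix.unitaryGroup (Fin n) ℂ ∧
          H ω = U * Matrix.diagonal (fun i => ((lam i ω : ℝ) : ℂ)) * Uᴴ := by
  choose L hmono U hU hL using fun ω => aux_sorted_diag (H ω) (hHherm ω)
  have hchar := fun ω => aux_charpoly _ _ _ (hU ω) (hL ω)
  have htr := fun ω => aux_trace _ _ _ (hU ω) (hL ω)
  have hdet : ∀ ω (x : ℂ), (Matrix.scalar (Fin n) x - H ω).det =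
      ∏ i, (x - ((L ω i : ℝ) : ℂ)) := by
    intro ω x
    rw [← Matrix.eval_charpoly, hchar]
    simp [Polynomial.eval_prod]
  have hcont : Continuous L := by
    rw [continuous_iff_continuousAt]
    intro ω₀
    unfold ContinuousAt
    rw [Filter.tendsto_iff_ultrafilter]
    intro g hg
    have hT : Continuous fun ω => ((H ω * H ω).trace).re :=
      Complex.continuous_re.comp (hHcont.matrix_mul hHcont).matrix_trace
    set c := ((H ω₀ * H ω₀).trace).re + 1 with hc
    have hev : ∀ᶠ ω in (g : Filter _), L ω ∈ Set.Icc (fun _ : Fin n => -(c + 1)) (fun _ => c + 1) := by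
      have h1 : ∀ᶠ ω in nhds ω₀, ((H ω * H ω).trace).re < c :=
        hT.continuousAt.eventually_lt_const (by simp [hc])
      filter_upwards [hg h1] with ω hω
      have hω' : ((H ω * H ω).trace).re < c := hω
      rw [htr] at hω'
      have key : ∀ i, L ω i ^ 2 < c := fun i =>
        lt_of_le_of_lt (Finset.single_le_sum (f := fun i => L ω i ^ 2)
          (fun j _ => sq_nonneg _) (Finset.mem_univ i)) hω'
      constructor
      · intro i
        have := key i
        show -(c+1) ≤ L ω i
        nlinarith [sq_nonneg (L ω i + 1)]
      · intro i
        have := key i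
        show L ω i ≤ c + 1
        nlinarith [sq_nonneg (L ω i - 1)]
    obtain ⟨μ, -, hμ⟩ := (isCompact_Icc (a := fun _ : Fin n => -(c + 1))
      (b := fun _ => c + 1)).ultrafilter_le_nhds (g.map L) (Filter.le_principal_iff.2 hev)
    have hμ' : Filter.Tendsto L g (nhds μ) := hμ
    have hi : ∀ i, Filter.Tendsto (fun ω => L ω i) g (nhds (μ i)) := fun i =>
      (tendsto_pi_nhds.1 hμ') i
    have : μ = L ω₀ := by
      apply aux_unique _ _ _ (hmono ω₀)
      · intro x
        have hA : Filter.Tendsto (fun ω => (Matrix.scalar (Fin n) x - H ω).det) g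
            (nhds (Matrix.scalar (Fin n) x - H ω₀).det) :=
          ((continuous_const.sub hHcont).matrix_det.tendsto ω₀).mono_left hg
        have hB : Filter.Tendsto (fun ω => ∏ i, (x - ((L ω i : ℝ) : ℂ))) g
            (nhds (∏ i, (x - ((μ i : ℝ) : ℂ)))) :=
          tendsto_finsetProd _ fun i _ =>
            tendsto_const_nhds.sub ((Complex.continuous_ofReal.tendsto _).comp (hi i))
        simp only [hdet] at hA
        exact tendsto_nhds_unique hB hA
      · intro i j hij
        exact le_of_tendsto_of_tendsto' (hi i) (hi j) fun ω => hmono ω hij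
    rw [← this]
    exact hμ'
  refine ⟨fun i ω => L ω i, fun i => (continuous_apply i).comp hcont, fun ω => ⟨?_, ?_, U ω, hU ω, hL ω⟩⟩
  · exact fun i j hij => hmono ω hij
  · rw [hchar, aux_roots]
end

section
/- Let s, n be positive natural numbers. Let Ŝ : ℝˢ → ℂ^{n×n} be continuous with Ŝ(ω) Hermitian and invertible for every ω, and let Q̂ : ℝˢ → ℂ^{n×n} be continuous with Q̂(ω) Hermitian positive definite for every ω. Assume Q̂(ω) = Ŝ(ω)·Q̂(ω)⁻¹·Ŝ(ω) for every ω ∈ ℝˢ. Then there exists a natural number k ≤ n and, for every ω ∈ ℝˢ, an invertible matrix T̂(ω) ∈ ℂ^{n×n}, such that with the constant signature matrix D = diag(I_k, −I_{n−k}) one has Q̂(ω) = T̂(ω)ᴴ·T̂(ω) and Ŝ(ω) = T̂(ω)ᴴ·D·T̂(ω) for every ω ∈ ℝˢ. -/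
open Matrix ComplexOrder

/-- The `n×n` signature matrix `diag(I_k, −I_{n−k})`: the first `k` diagonal entries are
`1` and the remaining ones are `−1`. -/
noncomputable def signatureMatrix (n k : ℕ) : Matrix (Fin n) (Fin n) ℂ :=
  Matrix.diagonal fun i => if (i : ℕ) < k then (1 : ℂ) else -1

/-- Pointwise version: simultaneous congruence normal form. -/
theorem pointwise_signature (n : ℕ) (S Q : Matrix (Fin n) (Fin n) ℂ)
    (hS : S.IsHermitian) (hQ : Q.PosDef) (h : Q = S * Q⁻¹ * S) :
    ∃ k : ℕ, k ≤ n ∧ ∃ T : Matrix (Fin n) (Fin n) ℂ, IsUnit T ∧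
      Q = Tᴴ * T ∧ S = Tᴴ * signatureMatrix n k * T := by
  classical
  obtain ⟨B, hB⟩ : ∃ B : Matrix (Fin n) (Fin n) ℂ, Q = Bᴴ * B := by
    open scoped MatrixOrder in
    exact CStarAlgebra.nonneg_iff_eq_star_mul_self.mp hQ.posSemidef.nonneg
  have hBu : IsUnit B := by
    have := hQ.isUnit
    rw [hB, Matrix.isUnit_iff_isUnit_det, Matrix.det_mul] at this
    rw [Matrix.isUnit_iff_isUnit_det]
    exact isUnit_of_mul_isUnit_right this
  have hBd : IsUnit B.det := (Matrix.isUnit_iff_isUnit_det B).1 hBu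
  have hBdH : IsUnit Bᴴ.det := by rw [Matrix.det_conjTranspose]; exact hBd.star
  have e1 : B * B⁻¹ = 1 := Matrix.mul_nonsing_inv _ hBd
  have e2 : B⁻¹ * B = 1 := Matrix.nonsing_inv_mul _ hBd
  have e3 : Bᴴ * Bᴴ⁻¹ = 1 := Matrix.mul_nonsing_inv _ hBdH
  have e4 : Bᴴ⁻¹ * Bᴴ = 1 := Matrix.nonsing_inv_mul _ hBdH
  set M : Matrix (Fin n) (Fin n) ℂ := Bᴴ⁻¹ * S * B⁻¹ with hM
  have hMh : M.IsHermitian := by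
    rw [Matrix.IsHermitian, hM, Matrix.conjTranspose_mul, Matrix.conjTranspose_mul, hS.eq,
      Matrix.conjTranspose_nonsing_inv, Matrix.conjTranspose_nonsing_inv,
      Matrix.conjTranspose_conjTranspose, Matrix.mul_assoc]
  have hSM : S = Bᴴ * M * B := by
    calc S = (Bᴴ * Bᴴ⁻¹) * S * (B⁻¹ * B) := by rw [e3, e2]; simp
      _ = _ := by rw [hM]; simp only [Matrix.mul_assoc]
  have hMM : M * M = 1 := by
    calc M * M = Bᴴ⁻¹ * (S * (B⁻¹ * Bᴴ⁻¹) * S) * B⁻¹ := by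
          rw [hM]; simp only [Matrix.mul_assoc]
      _ = Bᴴ⁻¹ * (S * Q⁻¹ * S) * B⁻¹ := by rw [hB, Matrix.mul_inv_rev]
      _ = Bᴴ⁻¹ * (Bᴴ * B) * B⁻¹ := by rw [← h, hB]
      _ = (Bᴴ⁻¹ * Bᴴ) * (B * B⁻¹) := by simp only [Matrix.mul_assoc]
      _ = 1 := by rw [e4, e1, Matrix.mul_one]
  obtain ⟨U, hU⟩ : ∃ U : Matrix (Fin n) (Fin n) ℂ, U = hMh.eigenvectorUnitary := ⟨_, rfl⟩
  have hU1 : Uᴴ * U = 1 := by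
    rw [hU]; exact Unitary.coe_star_mul_self _
  have hU2 : U * Uᴴ = 1 := by
    rw [hU]; exact Unitary.coe_mul_star_self _
  set d : Fin n → ℂ := fun i => (hMh.eigenvalues i : ℂ) with hd
  have hspec : M = U * diagonal d * Uᴴ := by
    have := hMh.spectral_theorem
    rw [Unitary.conjStarAlgAut_apply] at this
    rw [hU]
    exact this
  have hdd : diagonal d * diagonal d = 1 := by
    calc diagonal d * diagonal d
        = (Uᴴ * U) * diagonal d * (Uᴴ * U) * diagonal d * (Uᴴ * U) := by rw [hU1]; simp
      _ = Uᴴ * (M * M) * U := by rw [hspec]; simp only [Matrix.mul_assoc]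
      _ = 1 := by rw [hMM, Matrix.mul_one, hU1]
  have hd1 : ∀ i, d i = 1 ∨ d i = -1 := by
    intro i
    have := congrFun (congrFun hdd i) i
    simp only [Matrix.diagonal_mul_diagonal, Matrix.diagonal_apply_eq, Matrix.one_apply_eq] at this
    exact mul_self_eq_one_iff.mp this
  set k := Fintype.card {i // d i = 1} with hk
  have hkn : k ≤ n := by
    simpa using Fintype.card_subtype_le (fun i => d i = 1)
  have hcard : Fintype.card {i // d i = 1} = Fintype.card {i : Fin n // (i : ℕ) < k} := by
    rw [← hk, Fintype.card_subtype, Fin.card_filter_val_lt]; simp [hkn]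
  let e0 := Fintype.equivOfCardEq hcard
  let e : Equiv.Perm (Fin n) := e0.extendSubtype
  have hDe : signatureMatrix n k = (diagonal d).submatrix e.symm e.symm := by
    rw [Matrix.submatrix_diagonal_equiv, signatureMatrix]
    congr 1
    funext j
    obtain ⟨i, rfl⟩ := e.surjective j
    simp only [Function.comp, Equiv.symm_apply_apply]
    by_cases hi : d i = 1
    · rw [if_pos (e0.extendSubtype_mem i hi), hi]
    · rw [if_neg (e0.extendSubtype_not_mem i hi)]
      exact ((hd1 i).resolve_left hi).symm
  have hTT : Q = ((Uᴴ * B).submatrix e.symm id)ᴴ * (Uᴴ * B).submatrix e.symm id := by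
    rw [Matrix.conjTranspose_submatrix, Matrix.submatrix_mul_equiv, Matrix.submatrix_id_id,
      Matrix.conjTranspose_mul, Matrix.conjTranspose_conjTranspose, Matrix.mul_assoc,
      ← Matrix.mul_assoc U, hU2, Matrix.one_mul, hB]
  refine ⟨k, hkn, (Uᴴ * B).submatrix e.symm id, ?_, hTT, ?_⟩
  · have := hQ.isUnit
    rw [hTT, Matrix.isUnit_iff_isUnit_det, Matrix.det_mul] at this
    rw [Matrix.isUnit_iff_isUnit_det]
    exact isUnit_of_mul_isUnit_right this
  · rw [hDe, Matrix.conjTranspose_submatrix, Matrix.submatrix_mul_equiv,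
      Matrix.submatrix_mul_equiv, Matrix.submatrix_id_id,
      Matrix.conjTranspose_mul, Matrix.conjTranspose_conjTranspose]
    rw [hspec] at hSM
    rw [hSM]
    simp only [Matrix.mul_assoc]

theorem trace_signature (n k : ℕ) (hk : k ≤ n) :
    (signatureMatrix n k).trace = 2 * (k : ℂ) - n := by
  have h1 : ∀ i : Fin n, (if (i : ℕ) < k then (1 : ℂ) else -1)
      = 2 * (if (i : ℕ) < k then (1 : ℂ) else 0) - 1 := by
    intro i; split_ifs <;> norm_num
  rw [signatureMatrix, Matrix.trace_diagonal]
  simp only [h1]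
  rw [Finset.sum_sub_distrib, ← Finset.mul_sum, Finset.sum_boole, Fin.card_filter_val_lt]
  simp [hk]

theorem trace_congruence (n k : ℕ) (hk : k ≤ n) (S Q T : Matrix (Fin n) (Fin n) ℂ)
    (hT : IsUnit T) (hQ : Q = Tᴴ * T) (hS : S = Tᴴ * signatureMatrix n k * T) :
    (S * Q⁻¹).trace = 2 * (k : ℂ) - n := by
  have hTd : IsUnit T.det := (Matrix.isUnit_iff_isUnit_det T).1 hT
  have hTdH : IsUnit Tᴴ.det := by rw [Matrix.det_conjTranspose]; exact hTd.star
  rw [← trace_signature n k hk, hS, hQ, Matrix.mul_inv_rev, Matrix.mul_assoc, ← Matrix.mul_assoc T,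
    Matrix.mul_nonsing_inv _ hTd, Matrix.one_mul, Matrix.mul_assoc, Matrix.trace_mul_comm,
    Matrix.mul_assoc, Matrix.nonsing_inv_mul _ hTdH, Matrix.mul_one]

/-- **Statement 12.** If `Ŝ` is a continuous family of Hermitian invertible matrices and
`Q̂` a continuous family of Hermitian positive definite matrices with
`Q̂(ω) = Ŝ(ω)·Q̂(ω)⁻¹·Ŝ(ω)` for all `ω`, then there are `k ≤ n` and pointwise invertible
matrices `T̂(ω)` such that, with the constant signature matrix `D = diag(I_k, −I_{n−k})`,
`Q̂(ω) = T̂(ω)ᴴ·T̂(ω)` and `Ŝ(ω) = T̂(ω)ᴴ·D·T̂(ω)` for every `ω`. -/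
theorem exists_constant_signature_congruence
    (s n : ℕ) (hs : 0 < s) (hn : 0 < n)
    (S : EuclideanSpace ℝ (Fin s) → Matrix (Fin n) (Fin n) ℂ)
    (hScont : Continuous S)
    (hSherm : ∀ ω, (S ω).IsHermitian) (hSinv : ∀ ω, IsUnit (S ω))
    (Q : EuclideanSpace ℝ (Fin s) → Matrix (Fin n) (Fin n) ℂ)
    (hQcont : Continuous Q)
    (hQpos : ∀ ω, (Q ω).PosDef)
    (hcompat : ∀ ω, Q ω = S ω * (Q ω)⁻¹ * S ω) :
    ∃ k : ℕ, k ≤ n ∧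
      ∀ ω : EuclideanSpace ℝ (Fin s),
        ∃ T : Matrix (Fin n) (Fin n) ℂ, IsUnit T ∧
          Q ω = Tᴴ * T ∧ S ω = Tᴴ * signatureMatrix n k * T := by
  choose k hkn T hT hQT hST using fun ω =>
    pointwise_signature n (S ω) (Q ω) (hSherm ω) (hQpos ω) (hcompat ω)
  have hQinv : Continuous fun ω => (Q ω)⁻¹ := by
    have : (fun ω => (Q ω)⁻¹) = fun ω => ((Q ω).det)⁻¹ • (Q ω).adjugate := by
      funext ω
      rw [Matrix.inv_def, Ring.inverse_eq_inv']
    rw [this]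
    refine Continuous.smul (Continuous.inv₀ hQcont.matrix_det fun ω => ?_) hQcont.matrix_adjugate
    exact ((Matrix.isUnit_iff_isUnit_det _).1 (hQpos ω).isUnit).ne_zero
  have htr : Continuous fun ω => (S ω * (Q ω)⁻¹).trace :=
    (hScont.matrix_mul hQinv).matrix_trace
  have hkR : Continuous fun ω => (k ω : ℝ) := by
    have : (fun ω => (k ω : ℝ)) = fun ω => (((S ω * (Q ω)⁻¹).trace).re + n) / 2 := by
      funext ω
      rw [trace_congruence n (k ω) (hkn ω) _ _ _ (hT ω) (hQT ω) (hST ω)]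
      simp
    rw [this]
    exact ((Complex.continuous_re.comp htr).add continuous_const).div_const 2
  have hkc : Continuous k := Nat.isClosedEmbedding_coe_real.continuous_iff.mpr hkR
  refine ⟨k 0, hkn 0, fun ω => ⟨T ω, hT ω, hQT ω, ?_⟩⟩
  rw [PreconnectedSpace.constant inferInstance hkc (x := 0) (y := ω)]
  exact hST ω
end

section
/- For every ω ∈ ℝ and every s ∈ ℂ with Re(s) > 0, the polynomial value s⁴ + (2ω² + 1)·s² + ω⁴ is nonzero, and the Timoshenko transfer function Ĝ(s, ω) = (s³ + (ω² + 1)·s) / (s⁴ + (2ω² + 1)·s² + ω⁴) satisfies Re(Ĝ(s, ω)) ≥ 0. That is, for each fixed ω ∈ ℝ, the rational function s ↦ Ĝ(s, ω) is positive real. -/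
/-- Inversion preserves the open right half-plane. -/
lemma re_inv_pos_aux {z : ℂ} (hz : 0 < z.re) : 0 < (z⁻¹).re := by
  have h0 : z ≠ 0 := by
    rintro rfl
    simp at hz
  rw [Complex.inv_re]
  exact div_pos hz (Complex.normSq_pos.mpr h0)

lemma re_add_aux {s z : ℂ} (ω : ℝ) (hs : 0 < s.re) (hz : 0 < z.re) :
    0 < (s + (ω : ℂ) ^ 2 * z⁻¹).re := by
  have h := re_inv_pos_aux hz
  have e : (s + (ω : ℂ) ^ 2 * z⁻¹).re = s.re + ω ^ 2 * (z⁻¹).re := by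
    rw [← Complex.ofReal_pow, Complex.add_re, Complex.re_ofReal_mul]
  rw [e]
  positivity

lemma ne_zero_aux {z : ℂ} (hz : 0 < z.re) : z ≠ 0 := by
  rintro rfl
  simp at hz

/-- **Statement 17.** For every `ω ∈ ℝ` and `s ∈ ℂ` with `Re s > 0`, the denominator
`s⁴ + (2ω² + 1)s² + ω⁴` is nonzero and the Timoshenko transfer function
`Ĝ(s, ω) = (s³ + (ω² + 1)s) / (s⁴ + (2ω² + 1)s² + ω⁴)` has nonnegative real part; that
is, for each fixed `ω` the rational function `s ↦ Ĝ(s, ω)` is positive real. -/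
theorem timoshenko_transfer_function_positive_real :
    ∀ (ω : ℝ) (s : ℂ), 0 < s.re →
      s ^ 4 + (2 * (ω : ℂ) ^ 2 + 1) * s ^ 2 + (ω : ℂ) ^ 4 ≠ 0 ∧
      0 ≤ ((s ^ 3 + ((ω : ℂ) ^ 2 + 1) * s) /
        (s ^ 4 + (2 * (ω : ℂ) ^ 2 + 1) * s ^ 2 + (ω : ℂ) ^ 4)).re := by
  intro ω s hs
  obtain ⟨a, ha⟩ : ∃ a, a = s + (ω : ℂ) ^ 2 * s⁻¹ := ⟨_, rfl⟩
  have pa : 0 < a.re := ha ▸ re_add_aux ω hs hs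
  obtain ⟨b, hb⟩ : ∃ b, b = s + a⁻¹ := ⟨_, rfl⟩
  have pb : 0 < b.re := by
    rw [hb, Complex.add_re]
    exact add_pos hs (re_inv_pos_aux pa)
  obtain ⟨c, hc⟩ : ∃ c, c = s + (ω : ℂ) ^ 2 * b⁻¹ := ⟨_, rfl⟩
  have pc : 0 < c.re := hc ▸ re_add_aux ω hs pb
  have s0 := ne_zero_aux hs
  have a0 := ne_zero_aux pa
  have b0 := ne_zero_aux pb
  have c0 := ne_zero_aux pc
  have ea : a * s = s ^ 2 + (ω : ℂ) ^ 2 := by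
    rw [ha]; field_simp
  have eb : b * a = s * a + 1 := by
    rw [hb]; field_simp
  have ec : c * b = s * b + (ω : ℂ) ^ 2 := by
    rw [hc]; field_simp
  have eN : s ^ 3 + ((ω : ℂ) ^ 2 + 1) * s = b * a * s := by
    linear_combination (-s) * eb - s * ea
  have eD : s ^ 4 + (2 * (ω : ℂ) ^ 2 + 1) * s ^ 2 + (ω : ℂ) ^ 4 = c * (b * a * s) := by
    linear_combination (-a * s) * ec + s * eN - (ω : ℂ) ^ 2 * ea
  have hN : b * a * s ≠ 0 := mul_ne_zero (mul_ne_zero b0 a0) s0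
  rw [eD, eN]
  refine ⟨mul_ne_zero c0 hN, ?_⟩
  have e : b * a * s / (c * (b * a * s)) = c⁻¹ := by
    field_simp
  rw [e]
  exact (re_inv_pos_aux pc).le
end

section
/- For ω ∈ ℝ, define Â(ω) = [[0,0,1,0],[0,0,0,1],[−ω², iω, 0, 0],[−iω, −ω²−1, 0, 0]] ∈ ℂ^{4×4}, B̂(ω) = (0,0,1,0)ᵀ ∈ ℂ^{4×1}, and Ĉ(ω) = (0,0,1,0) ∈ ℂ^{1×4}. Then: (i) for every ω ≠ 0, the controllability matrix [B̂(ω), Â(ω)·B̂(ω), Â(ω)²·B̂(ω), Â(ω)³·B̂(ω)] ∈ ℂ^{4×4} has rank 4 and the observability matrix with rows Ĉ(ω), Ĉ(ω)·Â(ω), Ĉ(ω)·Â(ω)², Ĉ(ω)·Â(ω)³ has rank 4; (ii) for ω = 0, both matrices have rank strictly less than 4. -/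
open Matrix

/-- The Timoshenko-beam frequency-domain state matrix `Â(ω)`. -/
noncomputable def timA (ω : ℝ) : Matrix (Fin 4) (Fin 4) ℂ :=
  !![0, 0, 1, 0;
     0, 0, 0, 1;
     -(ω : ℂ) ^ 2, Complex.I * ω, 0, 0;
     -(Complex.I * ω), -(ω : ℂ) ^ 2 - 1, 0, 0]

/-- The Timoshenko-beam input matrix `B̂(ω)`. -/
noncomputable def timB (ω : ℝ) : Matrix (Fin 4) (Fin 1) ℂ := !![0; 0; 1; 0]

/-- The Timoshenko-beam output matrix `Ĉ(ω)`. -/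
noncomputable def timC (ω : ℝ) : Matrix (Fin 1) (Fin 4) ℂ := !![0, 0, 1, 0]

/-- The controllability matrix `[B̂(ω), Â(ω)B̂(ω), Â(ω)²B̂(ω), Â(ω)³B̂(ω)]` of the
Timoshenko beam, as a `4 × 4` matrix. -/
noncomputable def timCtrb (ω : ℝ) : Matrix (Fin 4) (Fin 4) ℂ :=
  Matrix.of fun i j => (timA ω ^ (j : ℕ) * timB ω) i 0

/-- The observability matrix with rows `Ĉ(ω), Ĉ(ω)Â(ω), Ĉ(ω)Â(ω)², Ĉ(ω)Â(ω)³` of the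
Timoshenko beam, as a `4 × 4` matrix. -/
noncomputable def timObsv (ω : ℝ) : Matrix (Fin 4) (Fin 4) ℂ :=
  Matrix.of fun i j => (timC ω * timA ω ^ (i : ℕ)) 0 j

theorem timCtrb_eq (ω : ℝ) : timCtrb ω =
    !![0, 1, 0, -(ω : ℂ) ^ 2;
       0, 0, 0, -(Complex.I * ω);
       1, 0, -(ω : ℂ) ^ 2, 0;
       0, 0, -(Complex.I * ω), 0] := by
  ext i j
  fin_cases i <;> fin_cases j <;>
    simp [timCtrb, timA, timB, pow_succ, Matrix.mul_apply, Fin.sum_univ_four]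

theorem timObsv_eq (ω : ℝ) : timObsv ω =
    !![0, 0, 1, 0;
       -(ω : ℂ) ^ 2, Complex.I * ω, 0, 0;
       0, 0, -(ω : ℂ) ^ 2, Complex.I * ω;
       (ω : ℂ) ^ 4 + (ω : ℂ) ^ 2, -(2 * Complex.I * (ω : ℂ) ^ 3) - Complex.I * ω, 0, 0] := by
  have hI := Complex.I_mul_I
  ext i j
  fin_cases i <;> fin_cases j <;>
    simp [timObsv, timA, timC, pow_succ, Matrix.mul_apply, Fin.sum_univ_four] <;>
    grind

theorem timCtrb_det (ω : ℝ) : (timCtrb ω).det = (ω : ℂ) ^ 2 := by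
  have hI := Complex.I_mul_I
  rw [timCtrb_eq]
  simp [Matrix.det_succ_row_zero, Fin.sum_univ_succ, Fin.succAbove]
  try grind

theorem timObsv_det (ω : ℝ) : (timObsv ω).det = (ω : ℂ) ^ 6 := by
  have hI := Complex.I_mul_I
  rw [timObsv_eq]
  simp [Matrix.det_succ_row_zero, Fin.sum_univ_succ, Fin.succAbove]
  try grind

theorem rank_four_of_det {M : Matrix (Fin 4) (Fin 4) ℂ} (h : M.det ≠ 0) : M.rank = 4 := by
  have := Matrix.rank_of_isUnit M ((Matrix.isUnit_iff_isUnit_det M).2 (isUnit_iff_ne_zero.2 h))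
  simpa using this

theorem rank_lt_four_of_det {M : Matrix (Fin 4) (Fin 4) ℂ} (h : M.det = 0) : M.rank < 4 := by
  obtain ⟨v, hv, hM⟩ := Matrix.exists_mulVec_eq_zero_iff.2 h
  have h1 := LinearMap.finrank_range_add_finrank_ker M.mulVecLin
  have h2 : 0 < Module.finrank ℂ (LinearMap.ker M.mulVecLin) := by
    rw [Module.finrank_pos_iff]
    refine ⟨⟨⟨v, by simpa using hM⟩, 0, fun h => hv (congrArg Subtype.val h)⟩⟩
  have h3 : M.rank = Module.finrank ℂ (LinearMap.range M.mulVecLin) := rfl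
  simp at h1
  omega

/-- **Statement 18.** The Timoshenko frequency-domain system is controllable and
observable for every `ω ≠ 0`, but neither controllable nor observable for `ω = 0`. -/
theorem timoshenko_minimal_iff_nonzero_frequency :
    (∀ ω : ℝ, ω ≠ 0 → (timCtrb ω).rank = 4 ∧ (timObsv ω).rank = 4) ∧
      (timCtrb 0).rank < 4 ∧ (timObsv 0).rank < 4 := by
  refine ⟨fun ω hω => ⟨rank_four_of_det ?_, rank_four_of_det ?_⟩,
    rank_lt_four_of_det ?_, rank_lt_four_of_det ?_⟩
  · rw [timCtrb_det]
    exact pow_ne_zero _ (by exact_mod_cast hω)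
  · rw [timObsv_det]
    exact pow_ne_zero _ (by exact_mod_cast hω)
  · simp [timCtrb_det]
  · simp [timObsv_det]
end
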